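/- Let A and B be nonempty finite subsets of a positive definite metric space X. Regarding the diversifiers w_{A,+} and w_{A∪B,+} as vectors indexed by A∪B (extending by zero), one has Σ_{x∈A∪B, y∈A∪B} e^{-d(x,y)} (w_{A∪B,+})_x (w_{A,+})_y ≥ |A|_+; that is, the Z_{A∪B}-pairing of the diversifier of A∪B with the diversifier of A is at least the maximum diversity of A. -/

import Mathlib

/-!
Let `w` be the diversifier of `s = A ∪ B` and `M = |s|₊`. The normalization `∑ w = M` together with
maximality forces `quadW s w w = M > 0`. Perturbing `w` in a nonnegative direction `v` supported on
`s`, maximality gives `(M + t V)² ≤ M · quadW s (w + t v) (w + t v)` for all `t > 0`, where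
`V = ∑ v`; comparing first-order terms in `t` yields `V ≤ quadW s w v`
(`IsDiversifier.sum_le_quadW`). The theorem is the case `v = w_{A,+}`, whose mass is `|A|₊`.

Positivity of the denominators only uses that `e^{-d}` is positive and the vectors are nonnegative.
-/

open scoped BigOperators

/-- A metric space is positive definite if every finite subspace has positive definite
similarity matrix `(e^{-d(x,y)})`. -/
def PosDefSpace (X : Type*) [MetricSpace X] : Prop :=
  ∀ s : Finset X,
    Matrix.PosDef (Matrix.of fun x y : s => Real.exp (-dist (x : X) (y : X)))

/-- The pairing `Σ_{x,y∈s} e^{-d(x,y)} u_x v_y`. -/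
noncomputable def quadW {X : Type*} [MetricSpace X] (s : Finset X) (u v : X → ℝ) : ℝ :=
  ∑ x ∈ s, ∑ y ∈ s, Real.exp (-dist x y) * u x * v y

/-- The quotient `(Σ_{x∈s} w_x)² / (Σ_{x,y∈s} e^{-d(x,y)} w_x w_y)`. -/
noncomputable def ratioW {X : Type*} [MetricSpace X] (s : Finset X) (w : X → ℝ) : ℝ :=
  (∑ x ∈ s, w x) ^ 2 / quadW s w w

/-- The maximum diversity `|s|₊` of a finite subset `s`. -/
noncomputable def finMaxDiv {X : Type*} [MetricSpace X] (s : Finset X) : ℝ :=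
  sSup {r : ℝ | ∃ w : X → ℝ,
    (∀ x ∉ s, w x = 0) ∧ w ≠ 0 ∧ (∀ x, 0 ≤ w x) ∧ r = ratioW s w}

/-- `w` is the diversifier of the finite subset `s` (extended by zero outside `s`):
a nonzero nonnegative maximizer of the quotient, normalized so that its total mass
is `|s|₊`. -/
def IsDiversifier {X : Type*} [MetricSpace X] (s : Finset X) (w : X → ℝ) : Prop :=
  (∀ x ∉ s, w x = 0) ∧ w ≠ 0 ∧ (∀ x, 0 ≤ w x) ∧
    (∀ v : X → ℝ, (∀ x ∉ s, v x = 0) → v ≠ 0 → (∀ x, 0 ≤ v x) →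
      ratioW s v ≤ ratioW s w) ∧
    ∑ x ∈ s, w x = finMaxDiv s

lemma quadW_comm {X : Type*} [MetricSpace X] (s : Finset X) (u v : X → ℝ) :
    quadW s u v = quadW s v u := by
  unfold quadW
  rw [Finset.sum_comm]
  refine Finset.sum_congr rfl fun x _ => Finset.sum_congr rfl fun y _ => ?_
  rw [dist_comm]
  ring

lemma quadW_add_smul {X : Type*} [MetricSpace X] (s : Finset X) (w v : X → ℝ) (t : ℝ) :
    quadW s (fun x => w x + t * v x) (fun x => w x + t * v x)
      = quadW s w w + 2 * t * quadW s w v + t ^ 2 * quadW s v v := by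
  have h : quadW s (fun x => w x + t * v x) (fun x => w x + t * v x)
      = quadW s w w + t * quadW s w v + t * quadW s v w + t ^ 2 * quadW s v v := by
    unfold quadW
    simp only [Finset.mul_sum, ← Finset.sum_add_distrib]
    refine Finset.sum_congr rfl fun x _ => Finset.sum_congr rfl fun y _ => ?_
    ring
  rw [h, quadW_comm s v w]
  ring

lemma quadW_nonneg {X : Type*} [MetricSpace X] (s : Finset X) {u v : X → ℝ}
    (hu : ∀ x, 0 ≤ u x) (hv : ∀ x, 0 ≤ v x) : 0 ≤ quadW s u v :=
  Finset.sum_nonneg fun x _ => Finset.sum_nonneg fun y _ =>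
    mul_nonneg (mul_nonneg (Real.exp_pos _).le (hu x)) (hv y)

lemma exists_mem_pos {X : Type*} {s : Finset X} {w : X → ℝ}
    (hs : ∀ x ∉ s, w x = 0) (h0 : w ≠ 0) (hw : ∀ x, 0 ≤ w x) : ∃ x ∈ s, 0 < w x := by
  obtain ⟨x, hx⟩ := Function.ne_iff.mp h0
  exact ⟨x, by_contra fun h => hx (hs x h), lt_of_le_of_ne (hw x) (Ne.symm hx)⟩

lemma quadW_self_pos {X : Type*} [MetricSpace X] {s : Finset X} {w : X → ℝ}
    (hs : ∀ x ∉ s, w x = 0) (h0 : w ≠ 0) (hw : ∀ x, 0 ≤ w x) : 0 < quadW s w w := by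
  obtain ⟨x, hx, hpos⟩ := exists_mem_pos hs h0 hw
  have hnn : ∀ a b, 0 ≤ Real.exp (-dist a b) * w a * w b := fun a b =>
    mul_nonneg (mul_nonneg (Real.exp_pos _).le (hw a)) (hw b)
  refine Finset.sum_pos' (fun a _ => Finset.sum_nonneg fun b _ => hnn a b) ⟨x, hx, ?_⟩
  exact Finset.sum_pos' (fun b _ => hnn x b) ⟨x, hx, by positivity⟩

lemma IsDiversifier.finMaxDiv_eq {X : Type*} [MetricSpace X] {s : Finset X} {w : X → ℝ}
    (h : IsDiversifier s w) : finMaxDiv s = ratioW s w := by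
  obtain ⟨hs, h0, hw, hmax, -⟩ := h
  refine IsGreatest.csSup_eq ⟨⟨w, hs, h0, hw, rfl⟩, ?_⟩
  rintro r ⟨v, hvs, hv0, hv, rfl⟩
  exact hmax v hvs hv0 hv

lemma IsDiversifier.finMaxDiv_pos {X : Type*} [MetricSpace X] {s : Finset X} {w : X → ℝ}
    (h : IsDiversifier s w) : 0 < finMaxDiv s := by
  obtain ⟨hs, h0, hw, -, hsum⟩ := h
  rw [← hsum]
  exact Finset.sum_pos' (fun x _ => hw x) (exists_mem_pos hs h0 hw)

lemma IsDiversifier.quadW_self {X : Type*} [MetricSpace X] {s : Finset X} {w : X → ℝ}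
    (h : IsDiversifier s w) : quadW s w w = finMaxDiv s := by
  have hM := h.finMaxDiv_pos
  have hE := h.finMaxDiv_eq
  obtain ⟨hs, h0, hw, -, hsum⟩ := h
  have hq := quadW_self_pos hs h0 hw
  rw [ratioW, hsum, eq_div_iff hq.ne', sq] at hE
  exact mul_left_cancel₀ hM.ne' hE

/-- First-order optimality of the diversifier: `Z w ≥ 1` entrywise on `s`, tested against a
nonnegative vector `v`. -/
lemma IsDiversifier.sum_le_quadW {X : Type*} [MetricSpace X] {s : Finset X} {w v : X → ℝ}
    (h : IsDiversifier s w) (hvs : ∀ x ∉ s, v x = 0) (hv : ∀ x, 0 ≤ v x) :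
    ∑ x ∈ s, v x ≤ quadW s w v := by
  have hM := h.finMaxDiv_pos
  have hE := h.finMaxDiv_eq
  have hq := h.quadW_self
  obtain ⟨hs, h0, hw, hmax, hsum⟩ := h
  have hQ := quadW_nonneg s hv hv
  rw [← hE] at hmax
  generalize finMaxDiv s = M at *
  have key : ∀ t : ℝ, 0 < t → (M + t * ∑ x ∈ s, v x) ^ 2
      ≤ M * (M + 2 * t * quadW s w v + t ^ 2 * quadW s v v) := by
    intro t ht
    have hus : ∀ x ∉ s, w x + t * v x = 0 := fun x hx => by simp [hs x hx, hvs x hx]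
    have hu : ∀ x, 0 ≤ w x + t * v x := fun x => add_nonneg (hw x) (mul_nonneg ht.le (hv x))
    have hu0 : (fun x => w x + t * v x) ≠ 0 := by
      obtain ⟨x, -, hx⟩ := exists_mem_pos hs h0 hw
      intro hc
      have h1 : w x + t * v x = 0 := congrFun hc x
      have h2 := mul_nonneg ht.le (hv x)
      linarith
    have h1 := hmax _ hus hu0 hu
    rw [ratioW, div_le_iff₀ (quadW_self_pos hus hu0 hu), quadW_add_smul, hq,
      Finset.sum_add_distrib, ← Finset.mul_sum, hsum] at h1
    exact h1
  generalize (∑ x ∈ s, v x) = V at *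
  generalize quadW s w v = p at *
  generalize quadW s v v = Q at *
  by_contra! hlt
  have hMQ : 0 ≤ M * Q := mul_nonneg hM.le hQ
  have hgap : 0 < M * (V - p) := mul_pos hM (sub_pos.mpr hlt)
  -- This `t` is small enough that the quadratic term `t² M Q` cannot offset the linear gap.
  obtain ⟨t, ht, htQ⟩ : ∃ t : ℝ, 0 < t ∧ t * (1 + M * Q) = M * (V - p) :=
    ⟨M * (V - p) / (1 + M * Q), by positivity, div_mul_cancel₀ _ (by positivity)⟩
  have h1 := key t ht
  have h2 : t * (2 * (M * (V - p)) + t * V ^ 2) ≤ t * (t * (M * Q)) := by nlinarith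
  have h3 := le_of_mul_le_mul_left h2 ht
  have h4 : 0 ≤ t * V ^ 2 := by positivity
  linarith

/-- the `Z_{A∪B}`-pairing of the diversifier of `A ∪ B` with the diversifier of
`A` (extended by zero) is at least `|A|₊`. -/
theorem stmt8 {X : Type*} [MetricSpace X] [DecidableEq X] (hpd : PosDefSpace X)
    (A B : Finset X) (hA : A.Nonempty) (hB : B.Nonempty)
    (wA wU : X → ℝ) (hwA : IsDiversifier A wA) (hwU : IsDiversifier (A ∪ B) wU) :
    finMaxDiv A ≤ quadW (A ∪ B) wU wA := by
  have hAs : ∀ x ∉ A ∪ B, wA x = 0 := fun x hx =>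
    hwA.1 x fun h => hx (Finset.mem_union_left B h)
  calc finMaxDiv A = ∑ x ∈ A, wA x := hwA.2.2.2.2.symm
    _ = ∑ x ∈ A ∪ B, wA x :=
      Finset.sum_subset Finset.subset_union_left fun x _ hx => hwA.1 x hx
    _ ≤ quadW (A ∪ B) wU wA := hwU.sum_le_quadW hAs hwA.2.2.1
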